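/- In the tensor product model of F_γ ⊗ D⁺_j (see context), assume j is a half-integer with j ≥ −½ and j > γ − 1. For M ∈ j+1−γ+ℕ₀, let V_M ⊆ W be the span of {e_ν ⊗ f_{M−ν} : ν ∈ M_γ, M−ν ∈ j+1+ℕ₀} (the J₀-eigenspace for eigenvalue M). Then Q maps V_M into itself, and the restriction of Q to V_M is diagonalizable: V_M has a basis of Q-eigenvectors, with eigenvalues exactly the pairwise distinct numbers −(j+μ)(j+μ+1) for μ ∈ {−γ, −γ+1, …, min(γ, M−j−1)}. -/

import Mathlib

noncomputable section

/-- The principal complex square root, `√z = z^{1/2}` (so `(√z)² = z` for all `z ∈ ℂ`). -/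
def csqrt (z : ℂ) : ℂ := z ^ (1 / 2 : ℂ)

/-- `Γ₊(x,y) = i √(x-y) √(x+y+1)`. -/
def Gp (x y : ℂ) : ℂ := Complex.I * csqrt (x - y) * csqrt (x + y + 1)

/-- `Γ₋(x,y) = i √(x+y) √(x-y+1)`. -/
def Gm (x y : ℂ) : ℂ := Complex.I * csqrt (x + y) * csqrt (x - y + 1)

/-- The carrier of the coupling `F_γ ⊗ D⁺_j` with `2γ = N`: the basis vector
`e_ν ⊗ f_m` with `ν = -γ + a` (`a ≤ N`) and `m = j + 1 + b` is indexed by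
`(a, b) : Fin (N+1) × ℕ`. -/
abbrev Wmod (N : ℕ) := (Fin (N + 1) × ℕ) →₀ ℂ

/-- `γ = N/2` as a complex number. -/
def gammaC (N : ℕ) : ℂ := (N : ℂ) / 2

/-- `ν = -γ + a`. -/
def nuC (N : ℕ) (a : Fin (N + 1)) : ℂ := -gammaC N + (a : ℕ)

/-- `m = j + 1 + b`. -/
def mC (j : ℂ) (b : ℕ) : ℂ := j + 1 + (b : ℕ)

/-- `J₀ (e_ν ⊗ f_m) = (ν + m) e_ν ⊗ f_m`. -/
def J0op (N : ℕ) (j : ℂ) : Wmod N →ₗ[ℂ] Wmod N :=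
  Finsupp.lsum ℂ fun ab => (nuC N ab.1 + mC j ab.2) • Finsupp.lsingle ab

/-- `J₊ (e_ν ⊗ f_m) = Γ₊(γ,ν) e_{ν+1} ⊗ f_m + Γ₊(j,m) e_ν ⊗ f_{m+1}` (terms with
vanishing coefficient drop out, so the wrap-around `Fin` index is harmless). -/
def Jpop (N : ℕ) (j : ℂ) : Wmod N →ₗ[ℂ] Wmod N :=
  Finsupp.lsum ℂ fun ab =>
    Gp (gammaC N) (nuC N ab.1) • Finsupp.lsingle (ab.1 + 1, ab.2) +
    Gp j (mC j ab.2) • Finsupp.lsingle (ab.1, ab.2 + 1)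

/-- `J₋ (e_ν ⊗ f_m) = Γ₋(γ,ν) e_{ν-1} ⊗ f_m + Γ₋(j,m) e_ν ⊗ f_{m-1}` (terms with
vanishing coefficient drop out, so the truncated index is harmless). -/
def Jmop (N : ℕ) (j : ℂ) : Wmod N →ₗ[ℂ] Wmod N :=
  Finsupp.lsum ℂ fun ab =>
    Gm (gammaC N) (nuC N ab.1) • Finsupp.lsingle (ab.1 - 1, ab.2) +
    Gm j (mC j ab.2) • Finsupp.lsingle (ab.1, ab.2 - 1)

/-- The Casimir operator `Q = -J₀(J₀+1) + J₋J₊`. -/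
def Qop (N : ℕ) (j : ℂ) : Wmod N →ₗ[ℂ] Wmod N :=
  -(J0op N j ∘ₗ (J0op N j + LinearMap.id)) + Jmop N j ∘ₗ Jpop N j

/-- The generating set of the `J₀`-eigenspace `V_M`, `M = j + 1 - γ + t`:
the basis vectors `e_ν ⊗ f_{M-ν}` with `ν = -γ + a ∈ M_γ` and `M - ν ∈ j + 1 + ℕ₀`. -/
def VMset (N t : ℕ) : Set (Wmod N) :=
  {w | ∃ a : Fin (N + 1), (a : ℕ) ≤ t ∧ w = Finsupp.single (a, t - (a : ℕ)) (1 : ℂ)}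

/-- The `J₀`-eigenspace `V_M ⊆ F_γ ⊗ D⁺_j`, `M = j + 1 - γ + t`. -/
def VM (N t : ℕ) : Submodule ℂ (Wmod N) := Submodule.span ℂ (VMset N t)

theorem csqrt_zero : csqrt 0 = 0 := by simp [csqrt]

theorem csqrt_mul_self (z : ℂ) : csqrt z * csqrt z = z := by
  rw [← sq, csqrt, ← Complex.cpow_nat_mul]
  norm_num

theorem Gm_add_one (x y : ℂ) : Gm x (y + 1) = Gp x y := by
  have h₁ : x + (y + 1) = x + y + 1 := by ring
  have h₂ : x - (y + 1) + 1 = x - y := by ring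
  rw [Gm, Gp, h₁, h₂]
  ring

theorem Gp_mul_self (x y : ℂ) : Gp x y * Gp x y = -((x - y) * (x + y + 1)) := by
  rw [Gp]
  linear_combination
    (csqrt (x - y) * csqrt (x - y) * (csqrt (x + y + 1) * csqrt (x + y + 1))) * Complex.I_mul_I
    - csqrt (x + y + 1) * csqrt (x + y + 1) * csqrt_mul_self (x - y)
    - (x - y) * csqrt_mul_self (x + y + 1)

theorem Gp_mul_Gm_add_one (x y : ℂ) : Gp x y * Gm x (y + 1) = -((x - y) * (x + y + 1)) := by
  rw [Gm_add_one, Gp_mul_self]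

theorem Gp_self (x : ℂ) : Gp x x = 0 := by simp [Gp, csqrt_zero]

theorem Gm_neg_self (x : ℂ) : Gm x (-x) = 0 := by simp [Gm, csqrt_zero]

theorem Gm_mC_zero (j : ℂ) : Gm j (mC j 0) = 0 := by simp [Gm, mC, csqrt_zero]

theorem mC_add_one (j : ℂ) (b : ℕ) : mC j (b + 1) = mC j b + 1 := by
  simp only [mC]
  push_cast
  ring

theorem nuC_zero (N : ℕ) : nuC N 0 = -gammaC N := by simp [nuC]

theorem nuC_last (N : ℕ) : nuC N (Fin.last N) = gammaC N := by
  simp only [nuC, gammaC, Fin.val_last]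
  ring

theorem nuC_add_one {N : ℕ} {a : Fin (N + 1)} (ha : a ≠ Fin.last N) :
    nuC N (a + 1) = nuC N a + 1 := by
  have h : ((a + 1 : Fin (N + 1)) : ℕ) = a + 1 :=
    Fin.val_add_one_of_lt (Fin.lt_last_iff_ne_last.2 ha)
  simp only [nuC, h]
  push_cast
  ring

theorem Gp_mul_Gm_nuC (N : ℕ) (a : Fin (N + 1)) :
    Gp (gammaC N) (nuC N a) * Gm (gammaC N) (nuC N (a + 1)) =
      -((gammaC N - nuC N a) * (gammaC N + nuC N a + 1)) := by
  by_cases ha : a = Fin.last N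
  · subst ha
    simp [nuC_last, Gp_self]
  · rw [nuC_add_one ha, Gp_mul_Gm_add_one]

theorem Gm_mul_Gp_nuC (N : ℕ) (a : Fin (N + 1)) :
    Gm (gammaC N) (nuC N a) * Gp (gammaC N) (nuC N (a - 1)) =
      -((gammaC N + nuC N a) * (gammaC N - nuC N a + 1)) := by
  by_cases ha : a = 0
  · subst ha
    simp [nuC_zero, Gm_neg_self]
  · have hl : a - 1 ≠ Fin.last N := by
      intro h
      apply ha
      have := congrArg (· + 1) h
      simpa using this
    have h := nuC_add_one hl
    rw [sub_add_cancel] at h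
    have h' := Gp_mul_Gm_nuC N (a - 1)
    rw [sub_add_cancel] at h'
    rw [mul_comm, h', h]
    ring

theorem Gp_mul_Gm_mC (j : ℂ) (b : ℕ) :
    Gp j (mC j b) * Gm j (mC j (b + 1)) = -((j - mC j b) * (j + mC j b + 1)) := by
  rw [mC_add_one, Gp_mul_Gm_add_one]

theorem J0op_single (N : ℕ) (j : ℂ) (a : Fin (N + 1)) (b : ℕ) :
    J0op N j (Finsupp.single (a, b) 1) = (nuC N a + mC j b) • Finsupp.single (a, b) 1 := by
  simp [J0op]

theorem Jpop_single (N : ℕ) (j : ℂ) (a : Fin (N + 1)) (b : ℕ) :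
    Jpop N j (Finsupp.single (a, b) 1) =
      Gp (gammaC N) (nuC N a) • Finsupp.single (a + 1, b) 1 +
        Gp j (mC j b) • Finsupp.single (a, b + 1) 1 := by
  simp [Jpop]

theorem Jmop_single (N : ℕ) (j : ℂ) (a : Fin (N + 1)) (b : ℕ) :
    Jmop N j (Finsupp.single (a, b) 1) =
      Gm (gammaC N) (nuC N a) • Finsupp.single (a - 1, b) 1 +
        Gm j (mC j b) • Finsupp.single (a, b - 1) 1 := by
  simp [Jmop]

/-- The commutation relation `[J₋, J₊] = 2 J₀`. -/
theorem Jmop_comp_Jpop (N : ℕ) (j : ℂ) :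
    Jmop N j ∘ₗ Jpop N j = Jpop N j ∘ₗ Jmop N j + (2 : ℂ) • J0op N j := by
  refine Finsupp.lhom_ext' fun ⟨a, b⟩ => LinearMap.ext_ring ?_
  simp only [LinearMap.comp_apply, LinearMap.add_apply, LinearMap.smul_apply,
    Finsupp.lsingle_apply, Jpop_single, Jmop_single, J0op_single, map_add, map_smul,
    add_sub_cancel_right, sub_add_cancel, Nat.add_sub_cancel, smul_add, smul_smul]
  rw [Gp_mul_Gm_nuC, Gm_mul_Gp_nuC, Gp_mul_Gm_mC]
  cases b with
  | zero =>
    rw [Gm_mC_zero]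
    have h : mC j 0 = j + 1 := by simp [mC]
    rw [h]
    module
  | succ b =>
    have h := Gp_mul_Gm_mC j b
    rw [mul_comm] at h
    simp only [Nat.add_sub_cancel]
    rw [h, mC_add_one]
    module

theorem Jmop_Jpop_apply (N : ℕ) (j : ℂ) (w : Wmod N) :
    Jmop N j (Jpop N j w) = Jpop N j (Jmop N j w) + (2 : ℂ) • J0op N j w :=
  LinearMap.congr_fun (Jmop_comp_Jpop N j) w

theorem single_mem_VM {N t : ℕ} {a : Fin (N + 1)} {b : ℕ} (h : (a : ℕ) + b = t) :
    (Finsupp.single (a, b) 1 : Wmod N) ∈ VM N t := by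
  refine Submodule.subset_span ⟨a, by lia, ?_⟩
  have hb : b = t - (a : ℕ) := by lia
  rw [hb]

theorem VM_le_of_single {N t : ℕ} {S : Submodule ℂ (Wmod N)}
    (h : ∀ (a : Fin (N + 1)) (b : ℕ), (a : ℕ) + b = t → (Finsupp.single (a, b) 1 : Wmod N) ∈ S) :
    VM N t ≤ S := by
  refine Submodule.span_le.2 ?_
  rintro _ ⟨a, ha, rfl⟩
  exact h a _ (by lia)

/-- The eigenvalue of `J₀` on `VM N t`. -/
def weight (N : ℕ) (j : ℂ) (t : ℕ) : ℂ := j + 1 - gammaC N + t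

theorem weight_add_one (N : ℕ) (j : ℂ) (t : ℕ) : weight N j (t + 1) = weight N j t + 1 := by
  simp only [weight]
  push_cast
  ring

theorem J0op_of_mem_VM {N t : ℕ} (j : ℂ) {w : Wmod N} (hw : w ∈ VM N t) :
    J0op N j w = weight N j t • w := by
  suffices VM N t ≤ LinearMap.eqLocus (J0op N j) (weight N j t • LinearMap.id) from this hw
  refine VM_le_of_single fun a b h => ?_
  rw [LinearMap.mem_eqLocus, J0op_single, LinearMap.smul_apply, LinearMap.id_apply]
  congr 1
  simp only [nuC, mC, weight, ← h]
  push_cast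
  ring

theorem Jpop_mem_VM {N t : ℕ} (j : ℂ) {w : Wmod N} (hw : w ∈ VM N t) :
    Jpop N j w ∈ VM N (t + 1) := by
  suffices VM N t ≤ (VM N (t + 1)).comap (Jpop N j) from this hw
  refine VM_le_of_single fun a b h => ?_
  rw [Submodule.mem_comap, Jpop_single]
  refine add_mem ?_ (Submodule.smul_mem _ _ (single_mem_VM (by lia)))
  by_cases ha : a = Fin.last N
  · subst ha
    simp [nuC_last, Gp_self]
  · refine Submodule.smul_mem _ _ (single_mem_VM ?_)
    rw [Fin.val_add_one_of_lt (Fin.lt_last_iff_ne_last.2 ha)]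
    lia

theorem Jmop_mem_VM {N t : ℕ} (j : ℂ) {w : Wmod N} (hw : w ∈ VM N (t + 1)) :
    Jmop N j w ∈ VM N t := by
  suffices VM N (t + 1) ≤ (VM N t).comap (Jmop N j) from this hw
  refine VM_le_of_single fun a b h => ?_
  rw [Submodule.mem_comap, Jmop_single]
  refine add_mem ?_ ?_
  · by_cases ha : a = 0
    · subst ha
      simp [nuC_zero, Gm_neg_self]
    · refine Submodule.smul_mem _ _ (single_mem_VM ?_)
      have : (a : ℕ) ≠ 0 := fun h => ha (Fin.ext h)
      rw [Fin.coe_sub_one, if_neg ha]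
      lia
  · cases b with
    | zero => simp [Gm_mC_zero]
    | succ b => exact Submodule.smul_mem _ _ (single_mem_VM (by lia))

theorem Jmop_of_mem_VM_zero {N : ℕ} (j : ℂ) {w : Wmod N} (hw : w ∈ VM N 0) :
    Jmop N j w = 0 := by
  suffices VM N 0 ≤ LinearMap.ker (Jmop N j) from this hw
  refine VM_le_of_single fun a b h => ?_
  obtain rfl : a = 0 := Fin.ext (by simp; lia)
  obtain rfl : b = 0 := by lia
  rw [LinearMap.mem_ker, Jmop_single, nuC_zero, Gm_neg_self, Gm_mC_zero]
  simp

theorem Qop_of_mem_VM {N t : ℕ} (j : ℂ) {w : Wmod N} (hw : w ∈ VM N t) :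
    Qop N j w = -(weight N j t * (weight N j t + 1)) • w + Jmop N j (Jpop N j w) := by
  simp only [Qop, LinearMap.add_apply, LinearMap.neg_apply, LinearMap.comp_apply,
    LinearMap.id_apply, map_add, J0op_of_mem_VM j hw, map_smul]
  module

theorem Qop_mem_VM {N t : ℕ} (j : ℂ) {w : Wmod N} (hw : w ∈ VM N t) : Qop N j w ∈ VM N t := by
  rw [Qop_of_mem_VM j hw]
  exact add_mem (Submodule.smul_mem _ _ hw) (Jmop_mem_VM j (Jpop_mem_VM j hw))

/-- Raising preserves eigenvectors of the Casimir operator. -/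
theorem Qop_Jpop {N t : ℕ} {j c : ℂ} {w : Wmod N} (hw : w ∈ VM N t) (hQ : Qop N j w = c • w) :
    Qop N j (Jpop N j w) = c • Jpop N j w := by
  have h : Jmop N j (Jpop N j w) = (c + weight N j t * (weight N j t + 1)) • w := by
    rw [Qop_of_mem_VM j hw] at hQ
    rw [add_smul, ← hQ]
    module
  rw [Qop_of_mem_VM j (Jpop_mem_VM j hw), Jmop_Jpop_apply, J0op_of_mem_VM j (Jpop_mem_VM j hw), h,
    map_smul, weight_add_one]
  module

theorem exists_basis_VM (N t : ℕ) :
    ∃ u : Fin (min N t + 1) → Wmod N,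
      LinearIndependent ℂ u ∧ Submodule.span ℂ (Set.range u) = VM N t := by
  let p : Fin (min N t + 1) → Fin (N + 1) × ℕ := fun k => (⟨k, by lia⟩, t - k)
  have hp : Function.Injective p := fun k l h => by
    simpa [p, Fin.ext_iff] using congrArg (fun x => (x.1 : ℕ)) h
  refine ⟨_, (Finsupp.linearIndependent_single_one ℂ (Fin (N + 1) × ℕ)).comp p hp,
    le_antisymm (Submodule.span_le.2 ?_) (VM_le_of_single fun a b h => ?_)⟩
  · rintro _ ⟨k, rfl⟩
    exact single_mem_VM (by simp; lia)
  · refine Submodule.subset_span ⟨⟨a, by lia⟩, ?_⟩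
    have hb : b = t - (a : ℕ) := by lia
    simp [p, hb]

theorem finrank_VM (N t : ℕ) : Module.finrank ℂ (VM N t) = min N t + 1 := by
  obtain ⟨u, hu, hs⟩ := exists_basis_VM N t
  rw [← hs, finrank_span_eq_card hu, Fintype.card_fin]

instance finiteDimensional_VM (N t : ℕ) : FiniteDimensional ℂ (VM N t) :=
  FiniteDimensional.of_finrank_pos (by rw [finrank_VM]; lia)

/-- For `i ≤ N` there is a lowest weight vector in `VM N i`. -/
theorem exists_lowest_weight {N i : ℕ} (j : ℂ) (hi : i ≤ N) :
    ∃ w ∈ VM N i, w ≠ 0 ∧ Jmop N j w = 0 := by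
  cases i with
  | zero => exact ⟨_, single_mem_VM (a := 0) (b := 0) rfl, by simp,
      Jmop_of_mem_VM_zero j (single_mem_VM rfl)⟩
  | succ i =>
    let f : VM N (i + 1) →ₗ[ℂ] VM N i := (Jmop N j).restrict fun _ => Jmop_mem_VM j
    have hlt : Module.finrank ℂ (VM N i) < Module.finrank ℂ (VM N (i + 1)) := by
      rw [finrank_VM, finrank_VM]
      lia
    have hf : LinearMap.ker f ≠ ⊥ :=
      LinearMap.ker_ne_bot_of_finrank_lt (K := ℂ) (V := VM N (i + 1)) (V₂ := VM N i) (f := f) hlt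
    obtain ⟨w, hw, hw0⟩ := Submodule.exists_mem_ne_zero_of_ne_bot hf
    exact ⟨w, w.2, by simpa using hw0, congrArg Subtype.val (LinearMap.mem_ker.1 hw)⟩

/-- The Casimir eigenvalue `-(j + μ)(j + μ + 1)` with `μ = -γ + i`. -/
def casimirEigenvalue (N : ℕ) (j : ℂ) (i : ℕ) : ℂ :=
  -((j + (-gammaC N + i)) * (j + (-gammaC N + i) + 1))

theorem casimirEigenvalue_add_one (N : ℕ) (j : ℂ) (t : ℕ) :
    casimirEigenvalue N j (t + 1) = -(weight N j t * (weight N j t + 1)) := by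
  simp only [casimirEigenvalue, weight]
  push_cast
  ring

theorem casimirEigenvalue_injective {N : ℕ} {jr : ℚ} (hhalf : ∃ k : ℤ, (k : ℚ) = 2 * jr)
    (hgt : (N : ℚ) / 2 - 1 < jr) : Function.Injective (casimirEigenvalue N (jr : ℂ)) := by
  obtain ⟨k, hk⟩ := hhalf
  have hkN : (-1 : ℤ) ≤ k - N := by
    have h : ((-2 : ℤ) : ℚ) < ((k - N : ℤ) : ℚ) := by
      push_cast
      linarith
    have := Int.cast_lt.1 h
    lia
  intro i i' h
  by_contra hne
  have hkC : (k : ℂ) = 2 * (jr : ℂ) := by exact_mod_cast congrArg (Rat.cast : ℚ → ℂ) hk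
  have hprod : (((i : ℤ) - i') * (k - N + i + i' + 1) : ℤ) = 0 := by
    have hC : ((((i : ℤ) - i') * (k - N + i + i' + 1) : ℤ) : ℂ) = 0 := by
      simp only [casimirEigenvalue, gammaC] at h
      push_cast
      rw [hkC]
      linear_combination -h
    exact_mod_cast hC
  rcases mul_eq_zero.1 hprod with h0 | h0 <;> lia

theorem exists_eigenvector {N i t : ℕ} {j : ℂ} (hinj : Function.Injective (casimirEigenvalue N j))
    (hi : i ≤ N) (hit : i ≤ t) :
    ∃ w ∈ VM N t, w ≠ 0 ∧ Qop N j w = casimirEigenvalue N j i • w := by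
  induction t, hit using Nat.le_induction with
  | base =>
    obtain ⟨w, hw, hw0, hJ⟩ := exists_lowest_weight j hi
    refine ⟨w, hw, hw0, ?_⟩
    rw [Qop_of_mem_VM j hw, Jmop_Jpop_apply, hJ, map_zero, J0op_of_mem_VM j hw]
    simp only [weight, casimirEigenvalue]
    module
  | succ t hit ih =>
    obtain ⟨w, hw, hw0, hQ⟩ := ih
    refine ⟨Jpop N j w, Jpop_mem_VM j hw, fun h0 => ?_, Qop_Jpop hw hQ⟩
    rw [Qop_of_mem_VM j hw, h0, map_zero, add_zero, ← casimirEigenvalue_add_one] at hQ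
    have := hinj (smul_left_injective ℂ hw0 hQ)
    lia

/-- In `F_γ ⊗ D⁺_j` with `j` a half-integer, `j ≥ -½` and `j > γ - 1`, the Casimir `Q`
preserves each `J₀`-eigenspace `V_M` and its restriction to `V_M` is diagonalizable,
with eigenvalues exactly the pairwise distinct numbers `-(j+μ)(j+μ+1)`,
`μ ∈ {-γ, …, min(γ, M - j - 1)}`. -/
theorem casimir_diagonalizable_on_VM (N : ℕ) (hN : 1 ≤ N) (jr : ℚ)
    (hhalf : ∃ k : ℤ, (k : ℚ) = 2 * jr) (hge : -(1 / 2) ≤ jr)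
    (hgt : (N : ℚ) / 2 - 1 < jr) (t : ℕ) :
    (∀ w ∈ VM N t, Qop N (jr : ℂ) w ∈ VM N t) ∧
    ∃ v : Fin (min N t + 1) → Wmod N,
      LinearIndependent ℂ v ∧
      Submodule.span ℂ (Set.range v) = VM N t ∧
      (∀ i : Fin (min N t + 1),
        Qop N (jr : ℂ) (v i) =
          (-(((jr : ℂ) + (-gammaC N + (i : ℕ))) *
              ((jr : ℂ) + (-gammaC N + (i : ℕ)) + 1))) • v i) ∧
      (∀ i i' : Fin (min N t + 1), i ≠ i' →
        -(((jr : ℂ) + (-gammaC N + (i : ℕ))) * ((jr : ℂ) + (-gammaC N + (i : ℕ)) + 1)) ≠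
        -(((jr : ℂ) + (-gammaC N + (i' : ℕ))) *
            ((jr : ℂ) + (-gammaC N + (i' : ℕ)) + 1))) := by
  have hinj := casimirEigenvalue_injective hhalf hgt
  choose v hvmem hv0 hvQ using fun i : Fin (min N t + 1) =>
    exists_eigenvector (t := t) hinj (show (i : ℕ) ≤ N by lia) (by lia)
  have hinj' : Function.Injective fun i : Fin (min N t + 1) => casimirEigenvalue N (jr : ℂ) i :=
    hinj.comp Fin.val_injective
  have hli : LinearIndependent ℂ v :=
    Module.End.eigenvectors_linearIndependent' (Qop N (jr : ℂ)) _ hinj' v fun i =>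
      ⟨Module.End.mem_eigenspace_iff.2 (hvQ i), hv0 i⟩
  refine ⟨fun w => Qop_mem_VM _, v, hli, ?_, hvQ, fun i i' hne => hinj'.ne hne⟩
  refine Submodule.eq_of_le_of_finrank_eq (Submodule.span_le.2 ?_) ?_
  · rintro _ ⟨i, rfl⟩
    exact hvmem i
  · rw [finrank_span_eq_card hli, finrank_VM, Fintype.card_fin]

end
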